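/- arXiv:1208.3366 — 2 statements merged into one kernel-verified Lean document; each statement's English description precedes it below -/
import Mathlib

section
/- Let p > 3 be a prime, let a, b be nonzero elements of 𝔽_p, and suppose D·u_{p−2}² = 0. Then the equation x³ + a·x = b has exactly two distinct solutions in 𝔽_p, one of which is a root of multiplicity 2 of the polynomial x³ + a·x − b, if and only if D = 0. In that case the multiplicity-2 solution is 3b/(2a), the other solution is −3b/a, and 3·(−3b/a)² + a ≠ 0. -/
open Polynomial

/-!
A double root `x` of `X³ + aX - b` is also a root of `3X² + a`, so `a = -3x²` and `b = -2x³`, which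
forces `-4a³ - 27b² = 0`. Conversely, solving these two equations for `x` gives `x = 3b/(2a)`. The
three roots sum to zero, so the remaining one is `-2x = -3b/a`, and the vanishing of the
discriminant is what makes `(X - 3b/(2a))² (X + 3b/a)` equal to `X³ + aX - b`.
-/

section DoubleRoot

variable {R : Type*} [CommRing R]

theorem eval_derivative_X_sub_C_sq_mul_X_sub_C (r s : R) :
    (derivative ((X - C r) ^ 2 * (X - C s))).eval s = (s - r) ^ 2 := by
  simp

theorem isRoot_X_sub_C_sq_mul_X_sub_C [NoZeroDivisors R] {r s z : R} :
    ((X - C r) ^ 2 * (X - C s)).IsRoot z ↔ z = r ∨ z = s := by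
  simp [sub_eq_zero]

theorem rootMultiplicity_X_sub_C_sq_mul_X_sub_C [IsDomain R] {r s : R} (hrs : r ≠ s) :
    rootMultiplicity r ((X - C r) ^ 2 * (X - C s)) = 2 := by
  have hne : (X - C r) ^ 2 * (X - C s) ≠ 0 :=
    mul_ne_zero (pow_ne_zero 2 (X_sub_C_ne_zero r)) (X_sub_C_ne_zero s)
  have hs : rootMultiplicity r (X - C s) = 0 :=
    rootMultiplicity_eq_zero (by simpa [sub_eq_zero] using hrs)
  rw [rootMultiplicity_mul hne, rootMultiplicity_X_sub_C_pow, hs]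

end DoubleRoot

/-- The depressed cubic `X³ + aX - b`, with constant term `-b` so that its roots are the solutions
of `x³ + a x = b`. Its discriminant is `-4a³ - 27b²`. -/
noncomputable def depressedCubic {R : Type*} [CommRing R] (a b : R) : R[X] :=
  X ^ 3 + C a * X - C b

namespace depressedCubic

section CommRing

variable {R : Type*} [CommRing R] {a b x : R}

theorem isRoot_iff : (depressedCubic a b).IsRoot x ↔ x ^ 3 + a * x = b := by
  simp [depressedCubic, sub_eq_zero]

theorem eval_derivative : (derivative (depressedCubic a b)).eval x = 3 * x ^ 2 + a := by
  norm_num [depressedCubic]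

theorem eq_of_one_lt_rootMultiplicity (hx : 1 < rootMultiplicity x (depressedCubic a b)) :
    a = -3 * x ^ 2 ∧ b = -2 * x ^ 3 := by
  have hne : depressedCubic a b ≠ 0 := by
    intro h
    simp [h] at hx
  obtain ⟨hroot, hderiv⟩ := (one_lt_rootMultiplicity_iff_isRoot hne).mp hx
  rw [isRoot_iff] at hroot
  rw [IsRoot.def, eval_derivative] at hderiv
  exact ⟨by linear_combination hderiv, by linear_combination x * hderiv - hroot⟩

theorem discr_eq_zero_of_one_lt_rootMultiplicity
    (hx : 1 < rootMultiplicity x (depressedCubic a b)) : -4 * a ^ 3 - 27 * b ^ 2 = 0 := by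
  obtain ⟨rfl, rfl⟩ := eq_of_one_lt_rootMultiplicity hx
  ring

end CommRing

section Field

variable {K : Type*} [Field K] {a b : K}

theorem two_ne_zero_of_discr_eq_zero (hb : b ≠ 0) (hD : -4 * a ^ 3 - 27 * b ^ 2 = 0) :
    (2 : K) ≠ 0 := by
  intro h2
  have hb2 : b ^ 2 = 0 := by linear_combination -hD - (2 * a ^ 3 + 13 * b ^ 2) * h2
  exact hb (pow_eq_zero_iff two_ne_zero |>.mp hb2)

theorem three_ne_zero_of_discr_eq_zero (ha : a ≠ 0) (hD : -4 * a ^ 3 - 27 * b ^ 2 = 0) :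
    (3 : K) ≠ 0 := by
  intro h3
  have ha3 : a ^ 3 = 0 := by linear_combination -hD - (a ^ 3 + 9 * b ^ 2) * h3
  exact ha (pow_eq_zero_iff three_ne_zero |>.mp ha3)

theorem double_root_ne_simple_root (ha : a ≠ 0) (hb : b ≠ 0)
    (hD : -4 * a ^ 3 - 27 * b ^ 2 = 0) : 3 * b / (2 * a) ≠ -3 * b / a := by
  have h2 := two_ne_zero_of_discr_eq_zero hb hD
  have h3 := three_ne_zero_of_discr_eq_zero ha hD
  have hdiff : 3 * b / (2 * a) - -3 * b / a = 3 * 3 * b / (2 * a) := by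
    field_simp
    ring
  rw [← sub_ne_zero, hdiff]
  exact div_ne_zero (mul_ne_zero (mul_ne_zero h3 h3) hb) (mul_ne_zero h2 ha)

theorem eq_X_sub_C_sq_mul_X_sub_C (ha : a ≠ 0) (hb : b ≠ 0)
    (hD : -4 * a ^ 3 - 27 * b ^ 2 = 0) :
    depressedCubic a b = (X - C (3 * b / (2 * a))) ^ 2 * (X - C (-3 * b / a)) := by
  have h2 := two_ne_zero_of_discr_eq_zero hb hD
  have hs : -3 * b / a = -2 * (3 * b / (2 * a)) := by field_simp
  have har : a = -3 * (3 * b / (2 * a)) ^ 2 := by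
    field_simp
    linear_combination -hD
  have hbr : b = -2 * (3 * b / (2 * a)) ^ 3 := by
    field_simp
    linear_combination -hD
  rw [hs]
  generalize 3 * b / (2 * a) = r at har hbr
  rw [depressedCubic, har, hbr]
  simp only [map_mul, map_pow, map_neg, map_ofNat]
  ring

theorem setOf_solution_eq (ha : a ≠ 0) (hb : b ≠ 0) (hD : -4 * a ^ 3 - 27 * b ^ 2 = 0) :
    {z : K | z ^ 3 + a * z = b} = {3 * b / (2 * a), -3 * b / a} := by
  ext z
  rw [Set.mem_ofPred_eq, ← isRoot_iff, eq_X_sub_C_sq_mul_X_sub_C ha hb hD,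
    isRoot_X_sub_C_sq_mul_X_sub_C, Set.mem_insert_iff, Set.mem_singleton_iff]

theorem rootMultiplicity_double_root (ha : a ≠ 0) (hb : b ≠ 0)
    (hD : -4 * a ^ 3 - 27 * b ^ 2 = 0) :
    rootMultiplicity (3 * b / (2 * a)) (depressedCubic a b) = 2 := by
  rw [eq_X_sub_C_sq_mul_X_sub_C ha hb hD]
  exact rootMultiplicity_X_sub_C_sq_mul_X_sub_C (double_root_ne_simple_root ha hb hD)

theorem eval_derivative_simple_root_ne_zero (ha : a ≠ 0) (hb : b ≠ 0)
    (hD : -4 * a ^ 3 - 27 * b ^ 2 = 0) : 3 * (-3 * b / a) ^ 2 + a ≠ 0 := by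
  rw [← eval_derivative (b := b), eq_X_sub_C_sq_mul_X_sub_C ha hb hD,
    eval_derivative_X_sub_C_sq_mul_X_sub_C]
  exact pow_ne_zero 2 (sub_ne_zero.mpr (double_root_ne_simple_root ha hb hD).symm)

end Field

end depressedCubic

open depressedCubic in
theorem stmt_2_general {K : Type*} [Field K] {a b : K} (ha : a ≠ 0) (hb : b ≠ 0) :
    ((∃ x y : K, x ≠ y ∧
        {z : K | z ^ 3 + a * z = b} = {x, y} ∧
        rootMultiplicity x (X ^ 3 + C a * X - C b : K[X]) = 2) ↔
      -4 * a ^ 3 - 27 * b ^ 2 = 0) ∧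
    (-4 * a ^ 3 - 27 * b ^ 2 = 0 →
      rootMultiplicity (3 * b / (2 * a)) (X ^ 3 + C a * X - C b : K[X]) = 2 ∧
      (-3 * b / a) ^ 3 + a * (-3 * b / a) = b ∧
      3 * b / (2 * a) ≠ -3 * b / a ∧
      {z : K | z ^ 3 + a * z = b} = {3 * b / (2 * a), -3 * b / a} ∧
      3 * (-3 * b / a) ^ 2 + a ≠ 0) := by
  refine ⟨⟨?_, fun hD => ?_⟩, fun hD => ?_⟩
  · rintro ⟨x, -, -, -, hx⟩
    exact discr_eq_zero_of_one_lt_rootMultiplicity (hx ▸ one_lt_two)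
  · exact ⟨_, _, double_root_ne_simple_root ha hb hD, setOf_solution_eq ha hb hD,
      rootMultiplicity_double_root ha hb hD⟩
  · have hsol := setOf_solution_eq ha hb hD
    have hsimple : -3 * b / a ∈ {z : K | z ^ 3 + a * z = b} := hsol ▸ Set.mem_insert_of_mem _ rfl
    exact ⟨rootMultiplicity_double_root ha hb hD, hsimple, double_root_ne_simple_root ha hb hD,
      hsol, eval_derivative_simple_root_ne_zero ha hb hD⟩

/-- For a prime `p > 3`, nonzero `a b : 𝔽_p`, with `D·u_{p−2}² = 0`:
the equation `x³ + a·x = b` has exactly two distinct solutions, one of which is a root of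
multiplicity 2 of `x³ + a·x − b`, iff `D = 0`.  In that case the multiplicity-2 solution is
`3b/(2a)`, the other solution is `−3b/a`, and `3·(−3b/a)² + a ≠ 0`. -/
theorem stmt_2 (p : ℕ) [Fact p.Prime] (hp : 3 < p)
    (a b : ZMod p) (ha : a ≠ 0) (hb : b ≠ 0)
    (u : ℕ → ZMod p) (hu1 : u 1 = 0) (hu2 : u 2 = -a) (hu3 : u 3 = b)
    (hurec : ∀ n, 1 ≤ n → u (n + 3) = b * u n - a * u (n + 1))
    (D : ZMod p) (hD : D = -4 * a ^ 3 - 27 * b ^ 2)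
    (h0 : D * u (p - 2) ^ 2 = 0) :
    ((∃ x y : ZMod p, x ≠ y ∧
        {z : ZMod p | z ^ 3 + a * z = b} = {x, y} ∧
        rootMultiplicity x (X ^ 3 + C a * X - C b : (ZMod p)[X]) = 2) ↔ D = 0) ∧
    (D = 0 →
      rootMultiplicity (3 * b / (2 * a)) (X ^ 3 + C a * X - C b : (ZMod p)[X]) = 2 ∧
      (-3 * b / a) ^ 3 + a * (-3 * b / a) = b ∧
      3 * b / (2 * a) ≠ -3 * b / a ∧
      {z : ZMod p | z ^ 3 + a * z = b} = {3 * b / (2 * a), -3 * b / a} ∧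
      3 * (-3 * b / a) ^ 2 + a ≠ 0) := by
  subst hD
  exact stmt_2_general ha hb
end

section
/- Let p > 3 be a prime and let a, b ∈ ℚ_p be nonzero with |a|_p < 1 and |b|_p = 1. If p ≡ 1 (mod 3) and b_0^{(p−1)/3} ≡ 1 (mod p), then the equation x³ + a·x = b has exactly three distinct solutions x ∈ ℚ_p with |x|_p = 1. If p ≡ 2 (mod 3), then it has exactly one solution x ∈ ℚ_p with |x|_p = 1. -/
/-!
An integral polynomial whose reduction mod `p` is separable has, by Hensel's lemma, exactly one
root in `ℤ_[p]` above each root of its reduction. If `‖a‖ < 1`, `‖b‖ = 1` and `p ∤ n`, the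
reduction of `X ^ n + a X - b` is the separable polynomial `X ^ n - b₀`, and a solution in `ℚ_[p]`
of norm one is the same thing as a root in `ℤ_[p]`. The solutions are thus counted by the `n`-th
roots of `b₀` in the cyclic group `(ZMod p)ˣ`.
-/

open Polynomial

section CyclicGroup

variable {G : Type*} [CommGroup G] [IsCyclic G] [Finite G]

-- `≤` is Lagrange's theorem, and both subgroups have order `|G| / gcd(|G|, n)`.
lemma range_powMonoidHom_eq_ker_powMonoidHom (n : ℕ) :
    (powMonoidHom n : G →* G).range =
      (powMonoidHom (Nat.card G / (Nat.card G).gcd n) : G →* G).ker := by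
  refine Subgroup.eq_of_le_of_card_ge ?_ ?_
  · rintro _ ⟨x, rfl⟩
    have hexp : n * (Nat.card G / (Nat.card G).gcd n) =
        Nat.card G * (n / (Nat.card G).gcd n) := by
      rw [← Nat.mul_div_assoc _ (Nat.gcd_dvd_left _ _),
        ← Nat.mul_div_assoc _ (Nat.gcd_dvd_right _ _), Nat.mul_comm]
    rw [MonoidHom.mem_ker, powMonoidHom_apply, powMonoidHom_apply, ← pow_mul, hexp, pow_mul,
      pow_card_eq_one', one_pow]
  · rw [IsCyclic.card_powMonoidHom_ker, IsCyclic.card_powMonoidHom_range,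
      Nat.gcd_eq_right (Nat.div_dvd_of_dvd (Nat.gcd_dvd_left _ _))]

lemma ncard_setOf_pow_eq {n : ℕ} {u : G} (hu : u ^ (Nat.card G / (Nat.card G).gcd n) = 1) :
    {x : G | x ^ n = u}.ncard = (Nat.card G).gcd n := by
  obtain ⟨x, rfl⟩ : u ∈ (powMonoidHom n : G →* G).range := by
    rwa [range_powMonoidHom_eq_ker_powMonoidHom, MonoidHom.mem_ker]
  rw [← IsCyclic.card_powMonoidHom_ker, ← Nat.card_congr ((powMonoidHom n).fiberEquivKer x)]
  rfl

end CyclicGroup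

lemma ncard_setOf_pow_eq_of_finite_field {F : Type*} [Field F] [Finite F] {n : ℕ} (hn : n ≠ 0)
    {u : F} (hu0 : u ≠ 0) (hu : u ^ ((Nat.card F - 1) / (Nat.card F - 1).gcd n) = 1) :
    {c : F | c ^ n = u}.ncard = (Nat.card F - 1).gcd n := by
  rw [← Nat.card_units] at hu ⊢
  lift u to Fˣ using hu0.isUnit
  have himage : {c : F | c ^ n = u} = Units.val '' {c : Fˣ | c ^ n = u} := by
    ext c
    refine ⟨fun hc => ?_, ?_⟩
    · have hc0 : c ≠ 0 := by
        rintro rfl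
        exact u.ne_zero (hc.symm.trans (zero_pow hn))
      exact ⟨Units.mk0 c hc0, Units.ext hc, rfl⟩
    · rintro ⟨c, hc, rfl⟩
      exact congrArg Units.val hc
  rw [himage, Set.ncard_image_of_injective _ Units.val_injective]
  exact ncard_setOf_pow_eq (Units.ext hu)

section Padic

variable {p : ℕ} [Fact p.Prime]

lemma padic_valuation_eq_zero_of_norm_eq_one {x : ℚ_[p]} (hx : ‖x‖ = 1) : x.valuation = 0 := by
  have hx0 : x ≠ 0 := norm_ne_zero_iff.mp (hx ▸ one_ne_zero)
  have hp : (1 : ℝ) < p := mod_cast (Fact.out : p.Prime).one_lt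
  rw [Padic.norm_eq_zpow_neg_valuation hx0,
    zpow_eq_one_iff_right₀ (zero_le_one.trans hp.le) hp.ne'] at hx
  exact neg_eq_zero.mp hx

lemma toZMod_eq_zero_iff_norm_lt_one {x : ℤ_[p]} : PadicInt.toZMod x = 0 ↔ ‖x‖ < 1 := by
  rw [← RingHom.mem_ker, PadicInt.ker_toZMod, IsLocalRing.mem_maximalIdeal, PadicInt.mem_nonunits]

lemma toZMod_ne_zero_iff_norm_eq_one {x : ℤ_[p]} : PadicInt.toZMod x ≠ 0 ↔ ‖x‖ = 1 := by
  rw [Ne, toZMod_eq_zero_iff_norm_lt_one, not_lt, (PadicInt.norm_le_one x).ge_iff_eq]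

lemma toZMod_eq_iff_norm_sub_lt_one {x y : ℤ_[p]} :
    PadicInt.toZMod x = PadicInt.toZMod y ↔ ‖x - y‖ < 1 := by
  rw [← toZMod_eq_zero_iff_norm_lt_one, map_sub, sub_eq_zero]

lemma existsUnique_isRoot_toZMod_eq {f : ℤ_[p][X]} {c : ZMod p}
    (hroot : (f.map PadicInt.toZMod).IsRoot c)
    (hsimple : (f.map PadicInt.toZMod).derivative.eval c ≠ 0) :
    ∃! x : ℤ_[p], f.IsRoot x ∧ PadicInt.toZMod x = c := by
  obtain ⟨t, rfl⟩ := ZMod.ringHom_surjective (PadicInt.toZMod (p := p)) c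
  have hderiv : ‖f.derivative.aeval t‖ = 1 := by
    rwa [derivative_map, eval_map_apply, toZMod_ne_zero_iff_norm_eq_one, ← coe_aeval_eq_eval]
      at hsimple
  have hsmall : ‖f.aeval t‖ < 1 := by
    rwa [IsRoot, eval_map_apply, toZMod_eq_zero_iff_norm_lt_one, ← coe_aeval_eq_eval] at hroot
  obtain ⟨x, hx, hxt, -, huniq⟩ := hensels_lemma (F := f) (a := t) (by rwa [hderiv, one_pow])
  rw [hderiv] at hxt huniq
  refine ⟨x, ⟨hx, toZMod_eq_iff_norm_sub_lt_one.mpr hxt⟩, ?_⟩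
  rintro y ⟨hy, hyt⟩
  exact huniq y hy (toZMod_eq_iff_norm_sub_lt_one.mp hyt)

lemma bijOn_toZMod_setOf_isRoot {f : ℤ_[p][X]} (hf : (f.map PadicInt.toZMod).Separable) :
    Set.BijOn PadicInt.toZMod {x | f.IsRoot x} {c | (f.map PadicInt.toZMod).IsRoot c} := by
  have hlift (c : ZMod p) (hc : (f.map PadicInt.toZMod).IsRoot c) :
      ∃! x : ℤ_[p], f.IsRoot x ∧ PadicInt.toZMod x = c :=
    existsUnique_isRoot_toZMod_eq hc (hf.eval₂_derivative_ne_zero (RingHom.id _) hc)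
  refine ⟨fun x hx => hx.map, fun x hx y hy hxy => ?_, fun c hc => (hlift c hc).exists⟩
  exact (hlift _ hy.map).unique ⟨hx, hxy⟩ ⟨hy, rfl⟩

lemma ncard_setOf_pow_add_mul_eq {n : ℕ} (hpn : ¬p ∣ n) {a b : ℤ_[p]} (ha : ‖a‖ < 1)
    (hb : ‖b‖ = 1) :
    {x : ℤ_[p] | x ^ n + a * x = b}.ncard = {c : ZMod p | c ^ n = PadicInt.toZMod b}.ncard := by
  have hmap : (X ^ n + C a * X - C b).map PadicInt.toZMod = X ^ n - C (PadicInt.toZMod b) := by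
    simp [toZMod_eq_zero_iff_norm_lt_one.mpr ha]
  have hsep : ((X ^ n + C a * X - C b).map PadicInt.toZMod).Separable := by
    rw [hmap]
    exact separable_X_pow_sub_C' p n _ hpn (toZMod_ne_zero_iff_norm_eq_one.mpr hb)
  have hbij := bijOn_toZMod_setOf_isRoot hsep
  simp only [hmap, IsRoot.def, eval_sub, eval_add, eval_mul, eval_pow, eval_X, eval_C,
    sub_eq_zero] at hbij
  rw [← hbij.image_eq, hbij.injOn.ncard_image]

lemma setOf_norm_eq_one_and_pow_add_mul_eq {n : ℕ} (hn : n ≠ 0) (a : ℤ_[p]) {b : ℤ_[p]}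
    (hb : ‖b‖ = 1) :
    {x : ℚ_[p] | ‖x‖ = 1 ∧ x ^ n + a * x = b} =
      algebraMap ℤ_[p] ℚ_[p] '' {x | x ^ n + a * x = b} := by
  have hcoe (x : ℤ_[p]) : (x : ℚ_[p]) ^ n + a * x = b ↔ x ^ n + a * x = b := by
    norm_cast
    exact Subtype.ext_iff.symm
  ext x
  constructor
  · rintro ⟨hx, hroot⟩
    obtain ⟨x, rfl⟩ : ∃ y : ℤ_[p], (y : ℚ_[p]) = x := ⟨⟨x, hx.le⟩, rfl⟩
    exact ⟨x, (hcoe x).mp hroot, rfl⟩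
  · rintro ⟨x, hroot, rfl⟩
    refine ⟨?_, (hcoe x).mpr hroot⟩
    rw [← toZMod_ne_zero_iff_norm_eq_one] at hb
    rw [PadicInt.algebraMap_apply, ← PadicInt.norm_def, ← toZMod_ne_zero_iff_norm_eq_one]
    intro hx
    apply hb
    rw [← hroot]
    simp [hx, hn]

end Padic

theorem stmt_10_general (p : ℕ) [Fact p.Prime] (n : ℕ) (hpn : ¬p ∣ n) (a b : ℚ_[p])
    (hna : ‖a‖ < 1) (hnb : ‖b‖ = 1) (b0 : ℕ) (hdigit : ‖b - (b0 : ℚ_[p])‖ < 1)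
    (hpow : (b0 : ZMod p) ^ ((p - 1) / (p - 1).gcd n) = 1) :
    {x : ℚ_[p] | ‖x‖ = 1 ∧ x ^ n + a * x = b}.ncard = (p - 1).gcd n := by
  have hn : n ≠ 0 := fun h => hpn (h ▸ dvd_zero p)
  obtain ⟨a, rfl⟩ : ∃ a' : ℤ_[p], (a' : ℚ_[p]) = a := ⟨⟨a, hna.le⟩, rfl⟩
  obtain ⟨b, rfl⟩ : ∃ b' : ℤ_[p], (b' : ℚ_[p]) = b := ⟨⟨b, hnb.le⟩, rfl⟩
  have hb : PadicInt.toZMod b = b0 := by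
    rw [← map_natCast PadicInt.toZMod b0, toZMod_eq_iff_norm_sub_lt_one]
    exact mod_cast hdigit
  have hb0 : (b0 : ZMod p) ≠ 0 := hb ▸ toZMod_ne_zero_iff_norm_eq_one.mpr hnb
  rw [setOf_norm_eq_one_and_pow_add_mul_eq hn a hnb,
    Set.ncard_image_of_injective _ (IsFractionRing.injective ℤ_[p] ℚ_[p]),
    ncard_setOf_pow_add_mul_eq hpn hna hnb, hb]
  simpa only [Nat.card_zmod] using
    ncard_setOf_pow_eq_of_finite_field hn hb0 (by rwa [Nat.card_zmod])

/-- For a prime `p > 3` and nonzero `a b : ℚ_p` with `|a|_p < 1`, `|b|_p = 1`: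
if `p ≡ 1 (mod 3)` and `b₀^((p−1)/3) ≡ 1 (mod p)` then `x³ + a·x = b` has exactly three
distinct solutions with `|x|_p = 1`; if `p ≡ 2 (mod 3)` then it has exactly one such
solution. -/
theorem stmt_10 (p : ℕ) [Fact p.Prime] (hp : 3 < p)
    (a b : ℚ_[p]) (ha : a ≠ 0) (hb : b ≠ 0)
    (hna : ‖a‖ < 1) (hnb : ‖b‖ = 1)
    (b0 : ℕ) (hb0l : 1 ≤ b0) (hb0u : b0 < p)
    (hdigit : ‖b * (p : ℚ_[p]) ^ (-b.valuation) - (b0 : ℚ_[p])‖ < 1) :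
    (p % 3 = 1 → (b0 : ZMod p) ^ ((p - 1) / 3) = 1 →
      ∃ x y z : ℚ_[p], x ≠ y ∧ x ≠ z ∧ y ≠ z ∧
        (‖x‖ = 1 ∧ x ^ 3 + a * x = b) ∧
        (‖y‖ = 1 ∧ y ^ 3 + a * y = b) ∧
        (‖z‖ = 1 ∧ z ^ 3 + a * z = b) ∧
        (∀ w : ℚ_[p], ‖w‖ = 1 → w ^ 3 + a * w = b → w = x ∨ w = y ∨ w = z)) ∧
    (p % 3 = 2 → ∃! x : ℚ_[p], ‖x‖ = 1 ∧ x ^ 3 + a * x = b) := by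
  have hp3 : ¬p ∣ 3 := Nat.not_dvd_of_pos_of_lt three_pos hp
  rw [padic_valuation_eq_zero_of_norm_eq_one hnb, neg_zero, zpow_zero, mul_one] at hdigit
  have hcount := stmt_10_general p 3 hp3 a b hna hnb b0 hdigit
  refine ⟨fun hmod hpow => ?_, fun hmod => ?_⟩
  · rw [Nat.gcd_eq_right (by omega : 3 ∣ p - 1)] at hcount
    obtain ⟨x, y, z, hxy, hxz, hyz, hsol⟩ := Set.ncard_eq_three.mp (hcount hpow)
    have hmem (w : ℚ_[p]) : (‖w‖ = 1 ∧ w ^ 3 + a * w = b) ↔ w = x ∨ w = y ∨ w = z :=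
      Set.ext_iff.mp hsol w
    exact ⟨x, y, z, hxy, hxz, hyz, (hmem x).mpr (by simp), (hmem y).mpr (by simp),
      (hmem z).mpr (by simp), fun w hw hroot => (hmem w).mp ⟨hw, hroot⟩⟩
  · have hgcd : (p - 1).gcd 3 = 1 :=
      ((Nat.Prime.coprime_iff_not_dvd Nat.prime_three).mpr (by omega)).symm
    have hb0 : (b0 : ZMod p) ≠ 0 := by
      rw [Ne, ZMod.natCast_eq_zero_iff]
      exact Nat.not_dvd_of_pos_of_lt hb0l hb0u
    rw [hgcd, Nat.div_one] at hcount
    obtain ⟨x, hsol⟩ := Set.ncard_eq_one.mp (hcount (ZMod.pow_card_sub_one_eq_one hb0))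
    exact ⟨x, Set.ext_iff.mp hsol x |>.mpr rfl, fun y hy => Set.ext_iff.mp hsol y |>.mp hy⟩
end
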